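/- arXiv:2210.10939 — 2 statements merged into one kernel-verified Lean document; each statement's English description precedes it below -/
import Mathlib

section
/- Let F(x,t) = x² A_{n−2}(x) + 2x B_{n−1}(x) t + C_n(x) t² + O(t³) be a family of polynomials of the second kind, where the subscripts denote degrees, A_{n−2}(0)·(B_{n−1}(0)² − A_{n−2}(0)·C_n(0)) ≠ 0 and A_{n−2}(x) is square-free. Then ver(F) = 4 · (B_{n−1}(0)² − A_{n−2}(0)·C_n(0)) · A_{n−2}(0)². -/
open Finset Polynomial

noncomputable section

/-- The limit of a Hahn (Puiseux) series as `t → 0`: the coefficient of the lowest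
power of `t` occurring in it (its leading coefficient). -/
def lim0 {L : Type*} [Field L] (f : HahnSeries ℚ L) : L := f.coeff f.order

/-- `s` is a Puiseux series with nonnegative support and constant term `a`
(i.e. `s(0) = a`). -/
def HasConst {L : Type*} [Field L] (s : HahnSeries ℚ L) (a : L) : Prop :=
  s.coeff 0 = a ∧ ∀ q < (0 : ℚ), s.coeff q = 0

/-- The natural ring map `A[[t]] → L((t^ℚ))` induced by `φ : A →+* L`. -/
def Phi {A L : Type*} [CommRing A] [Field L] (φ : A →+* L) :
    PowerSeries A →+* HahnSeries ℚ L :=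
  (HahnSeries.ofPowerSeries ℚ L).comp (PowerSeries.map φ)

/-- The polynomial with power-series coefficients determined by a family
`F(x,t) = Σ_i p_i(x) t^i` of polynomials of degree at most `n'`. -/
def fam {A : Type*} [CommRing A] (n' : ℕ) (p : ℕ → Polynomial A) :
    Polynomial (PowerSeries A) :=
  ∑ j ∈ Finset.range (n' + 1), Polynomial.C (PowerSeries.mk fun i => (p i).coeff j) * X ^ j

/-- `∏_{q ≠ q'} (S q − S q')`, the product of the differences of all (ordered) pairs of
distinct `t`-roots.  For a monic family it equals `(-1)^(N(N-1)/2)` times the discriminant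
`Δ_{A[[t]]}(F) = ∏_{q<q'} (S q − S q')²`; in particular it is nonzero iff
`Δ_{A[[t]]}(F) ≠ 0`. -/
def rootsSep {L : Type*} [Field L] {ι : Type*} [Fintype ι] [DecidableEq ι]
    (S : ι → HahnSeries ℚ L) : HahnSeries ℚ L :=
  ∏ q ∈ Finset.univ.offDiag, (S q.1 - S q.2)

/-- `Δ(F, f_ν)(a ν ℓ, t)_0`: the limit of the generalized formal discriminant of the family
with respect to `f_ν = ∏_ℓ (x − a ν ℓ)`, evaluated at `x = a ν ℓ`.  Here the `t`-roots
approaching the roots of `f_ν` are grouped as `s ν · i` for `i` in `Fin (n ν)`; following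
Definition 2.3, `s'_i(x) = f_ν(x) − ∏_ℓ (x − s ν ℓ i)`, so that
`s'_i(x) − s'_j(x) = ∏_ℓ (x − s ν ℓ j) − ∏_ℓ (x − s ν ℓ i)`, and
`Δ(F,f_ν)(x,t) = [∏_{others} (x − s_ℓ)]^(2 n ν − 2) ∏_{i<j} (s'_i − s'_j)²`. -/
def gdlim {L : Type*} [Field L] {m : ℕ} (d n : Fin m → ℕ)
    (a : (ν : Fin m) → Fin (d ν) → L)
    (s : (ν : Fin m) → (ℓ : Fin (d ν)) → Fin (n ν) → HahnSeries ℚ L)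
    (ν : Fin m) (ℓ : Fin (d ν)) : L :=
  lim0 ((∏ ν' ∈ Finset.univ.erase ν, ∏ ℓ', ∏ i', (HahnSeries.C (a ν ℓ) - s ν' ℓ' i')) ^
      (2 * n ν - 2) *
    ∏ q ∈ Finset.univ.filter (fun q : Fin (n ν) × Fin (n ν) => q.1 < q.2),
      ((∏ ℓ', (HahnSeries.C (a ν ℓ) - s ν ℓ' q.2)) -
        ∏ ℓ', (HahnSeries.C (a ν ℓ) - s ν ℓ' q.1)) ^ 2)

/-- The discriminant `Δ(f) = ∏_{ℓ<ℓ'} (a ℓ − a ℓ')²` of a monic split polynomial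
`f = ∏_ℓ (x − a ℓ)`. -/
def discOf {L : Type*} [Field L] {d : ℕ} (a : Fin d → L) : L :=
  ∏ q ∈ Finset.univ.filter (fun q : Fin d × Fin d => q.1 < q.2), (a q.1 - a q.2) ^ 2

/-- The vertex `ver(F)` of the family (Definition 3.1), computed from the root data:
`ver(F) = ∏_{ν,ℓ} Δ(F,f_ν)(a_{νℓ},t)_0 · ∏_{ν<ν'} res(f_ν,f_{ν'})^(2(n_ν+n_{ν'}−n_ν n_{ν'}))`,
where `res(f_ν, f_{ν'}) = ∏_{ℓ,ℓ'} (a ν ℓ − a ν' ℓ')`. -/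
def ver {L : Type*} [Field L] {m : ℕ} (d n : Fin m → ℕ)
    (a : (ν : Fin m) → Fin (d ν) → L)
    (s : (ν : Fin m) → (ℓ : Fin (d ν)) → Fin (n ν) → HahnSeries ℚ L) : L :=
  (∏ ν, ∏ ℓ, gdlim d n a s ν ℓ) *
    ∏ ν, ∏ ν' ∈ Finset.Ioi ν,
      (∏ ℓ, ∏ ℓ', (a ν ℓ - a ν' ℓ')) ^
        (2 * ((n ν : ℤ) + (n ν' : ℤ) - (n ν : ℤ) * (n ν' : ℤ)))

def HH {L : Type*} [Field L] (s : HahnSeries ℚ L) (q : ℚ) (a : L) : Prop :=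
  s.coeff q = a ∧ ∀ q' < q, s.coeff q' = 0

lemma HH.mul {L : Type*} [Field L] {s s' : HahnSeries ℚ L} {q q' : ℚ} {a a' : L}
    (h : HH s q a) (h' : HH s' q' a') : HH (s * s') (q + q') (a * a') := by
  have key : ∀ i j : ℚ, (i < q ∨ j < q') → s.coeff i * s'.coeff j = 0 := by
    rintro i j (hi | hj)
    · rw [h.2 i hi, zero_mul]
    · rw [h'.2 j hj, mul_zero]
  constructor
  · rw [HahnSeries.coeff_mul, Finset.sum_eq_single (q, q')]
    · simp only [h.1, h'.1]
    · rintro ⟨i, j⟩ hij hne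
      rw [Finset.mem_antidiagonal] at hij
      apply key
      by_contra hcon
      push Not at hcon
      apply hne
      have h3 : i + j = q + q' := hij.2.2
      ext
      · show i = q
        linarith [hcon.1, hcon.2]
      · show j = q'
        linarith [hcon.1, hcon.2]
    · intro hn
      rw [Finset.mem_antidiagonal] at hn
      by_contra hcon
      exact hn ⟨left_ne_zero_of_mul hcon, right_ne_zero_of_mul hcon, rfl⟩
  · intro p hp
    rw [HahnSeries.coeff_mul]
    apply Finset.sum_eq_zero
    rintro ⟨i, j⟩ hij
    rw [Finset.mem_antidiagonal] at hij
    have h3 : i + j = p := hij.2.2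
    apply key
    by_contra hcon
    push Not at hcon
    linarith [hcon.1, hcon.2]

lemma HH.add {L : Type*} [Field L] {s s' : HahnSeries ℚ L} {q : ℚ} {a a' : L}
    (h : HH s q a) (h' : HH s' q a') : HH (s + s') q (a + a') :=
  ⟨by simp [h.1, h'.1], fun p hp => by simp [h.2 p hp, h'.2 p hp]⟩

lemma HH.neg {L : Type*} [Field L] {s : HahnSeries ℚ L} {q : ℚ} {a : L}
    (h : HH s q a) : HH (-s) q (-a) :=
  ⟨by simp [h.1], fun p hp => by simp [h.2 p hp]⟩

lemma HH.lower {L : Type*} [Field L] {s : HahnSeries ℚ L} {q q' : ℚ} {a : L}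
    (h : HH s q a) (hq : q' < q) : HH s q' 0 :=
  ⟨h.2 _ hq, fun p hp => h.2 p (hp.trans hq)⟩

lemma HH.lim0 {L : Type*} [Field L] {s : HahnSeries ℚ L} {q : ℚ} {a : L}
    (h : HH s q a) (ha : a ≠ 0) : lim0 s = a := by
  have h1 : s.coeff q ≠ 0 := by rw [h.1]; exact ha
  have h2 : s.order ≤ q := HahnSeries.order_le_of_coeff_ne_zero h1
  have h0 : s ≠ 0 := by rintro rfl; simp at h1
  have h3 : s.order = q := by
    refine le_antisymm h2 (not_lt.1 fun hlt => ?_)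
    exact h0 (HahnSeries.coeff_order_eq_zero.1 (h.2 _ hlt))
  rw [_root_.lim0, h3, h.1]

lemma HH_one {L : Type*} [Field L] : HH (1 : HahnSeries ℚ L) 0 1 :=
  ⟨by simp, fun p hp => by simp [HahnSeries.coeff_one, hp.ne]⟩

lemma lim0_mul {L : Type*} [Field L] (x y : HahnSeries ℚ L) :
    lim0 (x * y) = lim0 x * lim0 y := by
  simp only [lim0, ← HahnSeries.leadingCoeff_eq, HahnSeries.leadingCoeff_mul]

lemma HH_Phi {A L : Type*} [CommRing A] [Field L] (φ : A →+* L) (f : PowerSeries A) (n : ℕ)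
    (hf : ∀ m < n, PowerSeries.coeff m f = 0) :
    HH (Phi φ f) n (φ (PowerSeries.coeff n f)) := by
  constructor
  · simp [Phi, HahnSeries.ofPowerSeries_apply_coeff]
  · intro q hq
    by_cases h : ∃ m : ℕ, (m : ℚ) = q
    · obtain ⟨m, rfl⟩ := h
      simp [Phi, HahnSeries.ofPowerSeries_apply_coeff, hf m (by exact_mod_cast hq)]
    · rw [Phi, RingHom.comp_apply, HahnSeries.ofPowerSeries_apply,
        HahnSeries.embDomain_of_notMem_range]
      rintro ⟨m, hm⟩
      exact h ⟨m, by simpa using hm⟩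

lemma fam_coeff {A : Type*} [CommRing A] (N : ℕ) (p : ℕ → Polynomial A) (j : ℕ) (hj : j ≤ N) :
    (fam N p).coeff j = PowerSeries.mk fun i => (p i).coeff j := by
  rw [fam, Polynomial.finsetSum_coeff, Finset.sum_eq_single j]
  · simp
  · intro b _ hb
    rw [Polynomial.coeff_C_mul_X_pow, if_neg hb.symm]
  · intro h
    exact absurd (Finset.mem_range.2 (by omega)) h

lemma prod_coeffs {L ι : Type*} [Field L] (S : Finset ι) (r : ι → HahnSeries ℚ L) (a : ι → L)
    (hr : ∀ i, HasConst (r i) (a i)) :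
    HH ((∏ i ∈ S, (X - C (r i))).coeff 0) 0 (∏ i ∈ S, (0 - a i)) ∧
      ∃ b, HH ((∏ i ∈ S, (X - C (r i))).coeff 1) 0 b := by
  classical
  induction S using Finset.induction_on with
  | empty =>
    refine ⟨by simpa using HH_one, 0, ?_⟩
    simp [Polynomial.coeff_one, HH]
  | insert i S hi ih =>
    obtain ⟨h0, b, h1⟩ := ih
    have hri : HH (r i) 0 (a i) := hr i
    rw [Finset.prod_insert hi, Finset.prod_insert hi]
    refine ⟨?_, (∏ i ∈ S, (0 - a i)) + -(a i * b), ?_⟩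
    · have := hri.neg.mul h0
      simpa [sub_mul] using this
    · have := hri.mul h1
      rw [add_zero] at this
      have := h0.add this.neg
      rw [sub_mul, Polynomial.coeff_sub, Polynomial.coeff_C_mul, Polynomial.coeff_X_mul,
        sub_eq_add_neg]
      exact this

/-- **Proposition 3.3** (families of the second kind).  Let
`F(x,t) = x² A_{n−2}(x) + 2x B_{n−1}(x) t + C_n(x) t² + O(t³)` with
`A_{n−2}(0)·(B_{n−1}(0)² − A_{n−2}(0) C_n(0)) ≠ 0` and `A_{n−2}` square-free.  Then
`ver(F) = 4 (B_{n−1}(0)² − A_{n−2}(0) C_n(0)) A_{n−2}(0)²`.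
Here `F_0 = x² A_{n−2}` has the factors `f_1 = x` (multiplicity `2`, `t`-roots `u, v`)
and `f_2 = A_{n−2} = ∏ᵢ (x − aA i)` (multiplicity `1`, `t`-roots `r i`), and `ver(F)`
is written out according to Definition 3.1. -/
theorem stmt5 {A L : Type*} [CommRing A] [IsDomain A]
    [Field L] [IsAlgClosed L] [CharZero L]
    (φ : A →+* L) (hφ : Function.Injective φ)
    (N : ℕ) (hN : 2 ≤ N)
    (Aq Bq Cq : Polynomial A) (hAmonic : Aq.Monic) (hAdeg : Aq.natDegree = N - 2)
    (hBdeg : Bq.natDegree ≤ N - 1) (hCdeg : Cq.natDegree ≤ N) (hsqfree : Squarefree Aq)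
    (hABC : Aq.eval 0 * (Bq.eval 0 ^ 2 - Aq.eval 0 * Cq.eval 0) ≠ 0)
    (p : ℕ → Polynomial A) (hdeg : ∀ i, (p i).natDegree ≤ N)
    (hp0 : p 0 = X ^ 2 * Aq) (hp1 : p 1 = 2 * X * Bq) (hp2 : p 2 = Cq)
    (aA : Fin (N - 2) → L) (haInj : Function.Injective aA) (haNe : ∀ i, aA i ≠ 0)
    (hAfac : Aq.map φ = ∏ i, (X - C (aA i)))
    (u v : HahnSeries ℚ L) (hu : HasConst u 0) (hv : HasConst v 0)
    (r : Fin (N - 2) → HahnSeries ℚ L) (hr : ∀ i, HasConst (r i) (aA i))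
    (c : HahnSeries ℚ L)
    (hsplit : (fam N p).map (Phi φ) =
      C c * ((X - C u) * (X - C v) * ∏ i, (X - C (r i)))) :
    lim0 ((∏ i, (HahnSeries.C (0 : L) - r i)) ^ (2 * 2 - 2) * (u - v) ^ 2) *
        (∏ i, lim0 (((HahnSeries.C (aA i) - u) * (HahnSeries.C (aA i) - v)) ^
          (2 * 1 - 2))) *
        (∏ i, ((0 : L) - aA i)) ^ (2 * ((2 : ℤ) + 1 - 2 * 1)) =
      4 * (φ (Bq.eval 0) ^ 2 - φ (Aq.eval 0) * φ (Cq.eval 0)) * φ (Aq.eval 0) ^ 2 := by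
  obtain ⟨hR0, b, hR1⟩ := prod_coeffs Finset.univ r aA hr
  have hα : φ (Aq.eval 0) = ∏ i, ((0 : L) - aA i) := by
    have := congrArg (Polynomial.eval 0) hAfac
    rw [Polynomial.eval_prod, Polynomial.eval_zero_map] at this
    simpa using this
  have hP : ∏ i, (HahnSeries.C (0 : L) - r i) = (∏ i, (X - C (r i))).coeff 0 := by
    rw [Polynomial.coeff_zero_eq_eval_zero, Polynomial.eval_prod]
    simp
  set R : Polynomial (HahnSeries ℚ L) := ∏ i, (X - C (r i)) with hR
  rw [← hα] at hR0 ⊢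
  rw [hP]
  set α := φ (Aq.eval 0) with hαdef
  have hexp : (X - C u) * (X - C v) * R = X * (X * R) - C (u + v) * (X * R) + C (u * v) * R := by
    simp only [map_add, map_mul]; ring
  have hc := fun j => congrArg (fun f : Polynomial (HahnSeries ℚ L) => f.coeff j) hsplit
  simp only [Polynomial.coeff_map, Polynomial.coeff_C_mul] at hc
  -- coefficient 0
  have e0 : Phi φ (PowerSeries.mk fun i => (p i).coeff 0) = c * (u * v * R.coeff 0) := by
    rw [← fam_coeff N p 0 (by omega), hc 0, hexp]
    simp
  have e1 : Phi φ (PowerSeries.mk fun i => (p i).coeff 1) =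
      c * (-((u + v) * R.coeff 0) + u * v * R.coeff 1) := by
    rw [← fam_coeff N p 1 (by omega), hc 1, hexp]
    congr 1
    rw [Polynomial.coeff_add, Polynomial.coeff_sub, Polynomial.coeff_C_mul, Polynomial.coeff_C_mul,
      Polynomial.coeff_X_mul, Polynomial.coeff_X_mul]
    simp
  have eN : Phi φ (PowerSeries.mk fun i => (p i).coeff N) = c := by
    rw [← fam_coeff N p N le_rfl, hc N]
    have hRm : R.Monic := Polynomial.monic_prod_of_monic _ _ fun i _ => Polynomial.monic_X_sub_C _
    have hRd : R.natDegree = N - 2 := by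
      rw [hR, Polynomial.natDegree_prod_of_monic _ _ fun i _ => Polynomial.monic_X_sub_C _]
      simp
    have hq : ((X - C u) * (X - C v)).Monic :=
      (Polynomial.monic_X_sub_C u).mul (Polynomial.monic_X_sub_C v)
    have hm : ((X - C u) * (X - C v) * R).Monic := hq.mul hRm
    have hd : ((X - C u) * (X - C v) * R).natDegree = N := by
      rw [hq.natDegree_mul hRm, (Polynomial.monic_X_sub_C u).natDegree_mul
        (Polynomial.monic_X_sub_C v), hRd, Polynomial.natDegree_X_sub_C,
        Polynomial.natDegree_X_sub_C]
      omega
    have := hm.coeff_natDegree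
    rw [hd] at this
    rw [this, mul_one]
  have h0 : HH (c * (u * v * R.coeff 0)) 2 (φ (Cq.eval 0)) := by
    rw [← e0]
    have := HH_Phi φ (PowerSeries.mk fun i => (p i).coeff 0) 2 (by
      intro m hm
      interval_cases m
      · simp [hp0]
      · simp [hp1, mul_assoc])
    simpa [hp2, Polynomial.coeff_zero_eq_eval_zero] using this
  have h1 : HH (c * (-((u + v) * R.coeff 0) + u * v * R.coeff 1)) 1 (2 * φ (Bq.eval 0)) := by
    rw [← e1]
    have := HH_Phi φ (PowerSeries.mk fun i => (p i).coeff 1) 1 (by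
      intro m hm
      interval_cases m
      simp [hp0, pow_two, mul_assoc])
    have h2 : (2 * X * Bq).coeff 1 = 2 * Bq.eval 0 := by
      rw [show (2 * X * Bq : Polynomial A) = X * (C 2 * Bq) by
        rw [show (C 2 : Polynomial A) = 2 from rfl]; ring]
      rw [Polynomial.coeff_X_mul, Polynomial.coeff_C_mul, Polynomial.coeff_zero_eq_eval_zero]
    have h3 : φ 2 = 2 := map_ofNat φ 2
    simpa [hp1, h2, h3] using this
  have hcc : HH c 0 1 := by
    have := HH_Phi φ (PowerSeries.mk fun i => (p i).coeff N) 0 (by simp)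
    rw [eN] at this
    have h2 : (X ^ 2 * Aq).coeff N = 1 := by
      have h3 := Polynomial.coeff_X_pow_mul Aq 2 (N - 2)
      rw [Nat.sub_add_cancel hN] at h3
      rw [h3, ← hAdeg]
      exact hAmonic
    simpa [hp0, h2] using this
  have hα0 : α ≠ 0 := by
    intro h
    exact left_ne_zero_of_mul hABC (hφ (by rw [map_zero]; exact h))
  have hβ0 : φ (Bq.eval 0) ^ 2 - α * φ (Cq.eval 0) ≠ 0 := by
    intro h
    apply right_ne_zero_of_mul hABC
    apply hφ
    rw [map_zero, ← h]
    simp [hαdef]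
  generalize R.coeff 0 = P at *
  generalize R.coeff 1 = Q at *
  generalize φ (Bq.eval 0) = β at *
  generalize φ (Cq.eval 0) = γ at *
  have hM : HH (c * (u + v) * P ^ 2) 1 (-(α * (2 * β))) := by
    have a1 := (hR0.mul h1).neg
    have a2 := (h0.mul hR1).lower (q' := 1) (by norm_num)
    rw [zero_add] at a1
    have a3 := a1.add a2
    rw [add_zero] at a3
    convert a3 using 1
    ring
  have hcP := hcc.mul hR0
  have hT : HH ((c * P) * (c * P) * (P ^ (2 * 2 - 2) * (u - v) ^ 2)) 2
      (4 * (β ^ 2 - α * γ) * (α * α)) := by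
    have a1 := hM.mul hM
    have a2 := ((hcP.mul hR0).mul hR0).mul h0
    have a3 : HH (4 : HahnSeries ℚ L) 0 4 := by
      have h2 : HH (1 + 1 : HahnSeries ℚ L) 0 (1 + 1) := HH_one.add HH_one
      have := h2.add h2
      norm_num at this
      exact this
    have a4 := (a3.mul a2).neg
    norm_num at a1 a4
    have a5 := a1.add a4
    convert a5 using 1
    · norm_num
      ring
    · ring
  have hl := hT.lim0 (by
    refine mul_ne_zero (mul_ne_zero (by norm_num) hβ0) (mul_ne_zero hα0 hα0))
  have hlc : lim0 (c * P) = α := by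
    rw [hcP.lim0 (by simpa using hα0), one_mul]
  rw [lim0_mul, lim0_mul, hlc] at hl
  have hmain : lim0 (P ^ (2 * 2 - 2) * (u - v) ^ 2) = 4 * (β ^ 2 - α * γ) := by
    apply mul_left_cancel₀ (mul_ne_zero hα0 hα0)
    rw [hl]; ring
  rw [hmain]
  have hone : lim0 (1 : HahnSeries ℚ L) = 1 := HH_one.lim0 one_ne_zero
  norm_num [hone]
end
end

section
/- Let A = k[y] and let F(x,t) = x³ + x C_2(x) t² + F_3(x) t³ + O(t⁴) be a family of polynomials with C_2, F_3 ∈ A[x] such that x does not divide 4C_2³ + 27F_3², and Δ_{A[[t]]}(F) ≠ 0. Then the general type of F is τ = 3. -/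
open Finset Polynomial

noncomputable section

/-- `f = a t^n + higher order`. -/
def DD {L : Type*} [Field L] (n : ℚ) (f : HahnSeries ℚ L) (a : L) : Prop :=
  (∀ q < n, f.coeff q = 0) ∧ f.coeff n = a

lemma DD.add {L : Type*} [Field L] {n : ℚ} {f g : HahnSeries ℚ L} {a b : L}
    (hf : DD n f a) (hg : DD n g b) : DD n (f + g) (a + b) := by
  refine ⟨fun q hq => ?_, ?_⟩
  · rw [HahnSeries.coeff_add, hf.1 q hq, hg.1 q hq, add_zero]
  · rw [HahnSeries.coeff_add, hf.2, hg.2]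

lemma DD.neg {L : Type*} [Field L] {n : ℚ} {f : HahnSeries ℚ L} {a : L}
    (hf : DD n f a) : DD n (-f) (-a) := by
  refine ⟨fun q hq => ?_, ?_⟩
  · rw [HahnSeries.coeff_neg, hf.1 q hq, neg_zero]
  · rw [HahnSeries.coeff_neg, hf.2]

lemma DD.weak {L : Type*} [Field L] {n m : ℚ} {f : HahnSeries ℚ L} {a : L}
    (hf : DD n f a) (h : m < n) : DD m f 0 :=
  ⟨fun q hq => hf.1 q (hq.trans h), hf.1 m h⟩

lemma DD.mul {L : Type*} [Field L] {m n : ℚ} {f g : HahnSeries ℚ L} {a b : L}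
    (hf : DD m f a) (hg : DD n g b) : DD (m + n) (f * g) (a * b) := by
  have hf' : ∀ q, f.coeff q ≠ 0 → m ≤ q := fun q h => not_lt.1 fun h' => h (hf.1 q h')
  have hg' : ∀ q, g.coeff q ≠ 0 → n ≤ q := fun q h => not_lt.1 fun h' => h (hg.1 q h')
  refine ⟨fun q hq => ?_, ?_⟩
  · rw [HahnSeries.coeff_mul]
    refine Finset.sum_eq_zero fun x hx => ?_
    rw [Finset.mem_addAntidiagonal] at hx
    have h1 := hf' _ hx.1
    have h2 := hg' _ hx.2.1
    have h3 := hx.2.2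
    linarith
  · rw [HahnSeries.coeff_mul, ← hf.2, ← hg.2]
    refine Finset.sum_eq_single (m, n) (fun x hx hne => ?_) (fun hx => ?_)
    · rw [Finset.mem_addAntidiagonal] at hx
      have h1 := hf' _ hx.1
      have h2 := hg' _ hx.2.1
      have h3 := hx.2.2
      exact absurd (Prod.ext (by simp; linarith) (by simp; linarith)) hne
    · rw [Finset.mem_addAntidiagonal] at hx
      by_contra h
      exact hx ⟨left_ne_zero_of_mul h, right_ne_zero_of_mul h, rfl⟩

lemma DD.ofPS {L : Type*} [Field L] (n : ℕ) (f : PowerSeries L)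
    (h : ∀ i < n, PowerSeries.coeff i f = 0) :
    DD (n : ℚ) (HahnSeries.ofPowerSeries ℚ L f) (PowerSeries.coeff n f) := by
  refine ⟨fun q hq => ?_, HahnSeries.ofPowerSeries_apply_coeff f n⟩
  by_cases hr : ∃ i : ℕ, (i : ℚ) = q
  · obtain ⟨i, rfl⟩ := hr
    rw [HahnSeries.ofPowerSeries_apply_coeff]
    exact h i (by exact_mod_cast hq)
  · rw [HahnSeries.ofPowerSeries_apply]
    apply HahnSeries.embDomain_notin_range
    rintro ⟨i, hi⟩
    exact hr ⟨i, hi⟩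

lemma DD.root {L : Type*} [Field L] {s g0 g1 g2 g3 : HahnSeries ℚ L} {a b d : L}
    (h3 : DD 0 g3 1) (h2 : DD 2 g2 d) (h1 : DD 2 g1 a) (h0 : DD 3 g0 b)
    (h : g3 * (s * (s * s)) + (g2 * (s * s) + (g1 * s + g0)) = 0) :
    DD 1 s (s.coeff 1) := by
  refine ⟨fun q hq => ?_, rfl⟩
  by_contra hne
  have hs0 : s ≠ 0 := by rintro rfl; simp at hne
  have hle : s.order ≤ q := HahnSeries.order_le_of_coeff_ne_zero hne
  set v := s.order with hv
  have hd : DD v s (s.coeff v) := ⟨fun q hq => HahnSeries.coeff_eq_zero_of_lt_order hq, rfl⟩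
  have e3 := h3.mul (hd.mul (hd.mul hd))
  have e2 := (h2.mul (hd.mul hd)).weak (m := 0 + (v + (v + v))) (by linarith)
  have e1 := (h1.mul hd).weak (m := 0 + (v + (v + v))) (by linarith)
  have e0 := h0.weak (m := 0 + (v + (v + v))) (by linarith)
  have e := (e3.add (e2.add (e1.add e0))).2
  rw [h] at e
  simp only [HahnSeries.coeff_zero, add_zero, one_mul] at e
  have : s.coeff v ≠ 0 := HahnSeries.coeff_order_eq_zero.not.2 hs0 
  exact mul_ne_zero this (mul_ne_zero this this) e.symm

lemma DD.order_sub {L : Type*} [Field L] {f g : HahnSeries ℚ L} {a b : L}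
    (hf : DD 1 f a) (hg : DD 1 g b) (h : a ≠ b) : (f - g).order = 1 := by
  have hd := hf.add hg.neg
  rw [← sub_eq_add_neg, ← sub_eq_add_neg] at hd
  have hne : (f - g).coeff 1 ≠ 0 := by rw [hd.2]; exact sub_ne_zero.2 h
  refine le_antisymm (HahnSeries.order_le_of_coeff_ne_zero hne) (not_lt.1 fun hlt => ?_)
  have h0 : f - g ≠ 0 := by intro h0; rw [h0] at hne; simp at hne
  exact HahnSeries.coeff_order_eq_zero.not.2 h0 (hd.1 _ hlt)

/-- **Example 4.9 (c).**  Let `A = k[y]` and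
`F(x,t) = x³ + x C₂(x) t² + F₃(x) t³ + O(t⁴)` with `x ∤ (4C₂³ + 27F₃²)` and
`Δ_{A[[t]]}(F) ≠ 0`.  Then the general type of `F` is `τ = 3`:
here `F_0 = x³`, so the only factor is `f = x` with multiplicity `3`, whose three
`t`-roots are the `s i`, and `τ = ⌊3 · max_{i≠j} ord(s i − s j)⌋ = 3`. -/
theorem stmt17 {k L : Type*} [Field k] [IsAlgClosed k] [CharZero k]
    [Field L] [IsAlgClosed L] [CharZero L]
    (φ : Polynomial k →+* L) (hφ : Function.Injective φ)
    (C₂ F₃ : Polynomial (Polynomial k))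
    (p : ℕ → Polynomial (Polynomial k)) (hdeg : ∀ i, (p i).natDegree ≤ 3)
    (hp0 : p 0 = X ^ 3) (hp1 : p 1 = 0) (hp2 : p 2 = X * C₂) (hp3 : p 3 = F₃)
    (hx : ¬ (X ∣ (4 * C₂ ^ 3 + 27 * F₃ ^ 2)))
    (s : Fin 3 → HahnSeries ℚ L) (hs : ∀ i, HasConst (s i) 0)
    (c : HahnSeries ℚ L)
    (hsplit : (fam 3 p).map (Phi φ) = C c * ∏ i, (X - C (s i)))
    (hΔ : rootsSep s ≠ 0) :
    (∀ i j, i ≠ j → ⌊(3 : ℚ) * (s i - s j).order⌋ ≤ 3) ∧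
      ∃ i j, i ≠ j ∧ ⌊(3 : ℚ) * (s i - s j).order⌋ = 3 := by
  have hg : ∀ j ≤ 3, ((fam 3 p).map (Phi φ)).coeff j =
      HahnSeries.ofPowerSeries ℚ L (PowerSeries.mk fun i => φ ((p i).coeff j)) := by
    intro j hj
    have : (fam 3 p).coeff j = PowerSeries.mk fun i => (p i).coeff j := by
      rw [fam, finset_sum_coeff]
      simp only [coeff_C_mul, coeff_X_pow, mul_ite, mul_one, mul_zero]
      rw [Finset.sum_ite_eq, if_pos (by simp; omega)]
    rw [coeff_map, this, Phi, RingHom.comp_apply]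
    congr 1
  have hprod : C c * ∏ i, (X - C (s i)) =
      C c * X ^ 3 + C (-(c * (s 0 + (s 1 + s 2)))) * X ^ 2
      + C (c * (s 0 * s 1 + (s 0 * s 2 + s 1 * s 2))) * X
      + C (-(c * (s 0 * (s 1 * s 2)))) := by
    rw [Fin.prod_univ_three]
    simp only [C_neg, C_mul, C_add]
    ring
  rw [hsplit, hprod] at hg
  have g3 := hg 3 (by norm_num)
  have g2 := hg 2 (by norm_num)
  have g1 := hg 1 (by norm_num)
  have g0 := hg 0 (by norm_num)
  simp [coeff_X, coeff_C, -map_neg, -map_mul, -map_add, -C_neg, -C_mul, -C_add] at g3 g2 g1 g0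
  set a := φ (C₂.coeff 0) with ha
  set b := φ (F₃.coeff 0) with hb
  have d3 : DD 0 c 1 := by
    have := DD.ofPS 0 (PowerSeries.mk fun i => φ ((p i).coeff 3)) (by simp)
    rw [← g3] at this
    simpa [hp0] using this
  have d2 : ∃ d, DD 2 (-(c * (s 0 + (s 1 + s 2)))) d := by
    have := DD.ofPS 2 (PowerSeries.mk fun i => φ ((p i).coeff 2)) (by
      intro i hi; interval_cases i <;> simp [hp0, hp1, coeff_X_pow])
    rw [← g2] at this
    exact ⟨_, this⟩
  have d1 : DD 2 (c * (s 0 * s 1 + (s 0 * s 2 + s 1 * s 2))) a := by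
    have := DD.ofPS 2 (PowerSeries.mk fun i => φ ((p i).coeff 1)) (by
      intro i hi; interval_cases i <;> simp [hp0, hp1, coeff_X_pow])
    rw [← g1] at this
    simpa [hp2] using this
  have d0 : DD 3 (-(c * (s 0 * (s 1 * s 2)))) b := by
    have := DD.ofPS 3 (PowerSeries.mk fun i => φ ((p i).coeff 0)) (by
      intro i hi; interval_cases i <;> simp [hp0, hp1, hp2, coeff_X_pow])
    rw [← g0] at this
    simpa [hp3] using this
  obtain ⟨d, d2⟩ := d2
  have r0 : DD 1 (s 0) _ := DD.root d3 d2 d1 d0 (by ring)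
  have r1 : DD 1 (s 1) _ := DD.root d3 d2 d1 d0 (by ring)
  have r2 : DD 1 (s 2) _ := DD.root d3 d2 d1 d0 (by ring)
  have e1 := (d3.mul (r0.add (r1.add r2))).neg.2
  have e2 := (d3.mul ((r0.mul r1).add ((r0.mul r2).add (r1.mul r2)))).2
  have e3 := (d3.mul (r0.mul (r1.mul r2))).neg.2
  have x1 := (d2.weak (m := 1) (by norm_num)).2
  have x2 := d1.2
  have x3 := d0.2
  rw [show (0 : ℚ) + 1 = 1 by norm_num, x1] at e1
  rw [show (0 : ℚ) + (1 + 1) = 2 by norm_num, x2] at e2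
  rw [show (0 : ℚ) + (1 + (1 + 1)) = 3 by norm_num, x3] at e3
  have hD : 4 * a ^ 3 + 27 * b ^ 2 ≠ 0 := by
    intro h0
    apply hx
    rw [X_dvd_iff]
    apply hφ
    rw [map_zero, ← h0, ha, hb]
    have h4 : φ 4 = 4 := map_ofNat φ 4
    have h27 : φ 27 = 27 := map_ofNat φ 27
    simp [coeff_zero_eq_eval_zero, h4, h27]
  generalize (s 0).coeff 1 = u0 at *
  generalize (s 1).coeff 1 = u1 at *
  generalize (s 2).coeff 1 = u2 at *
  have hu : u2 = -u0 - u1 := by linear_combination e1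
  have hdisc : 4 * a ^ 3 + 27 * b ^ 2 = - ((u0 - u1) * (u0 - u2) * (u1 - u2)) ^ 2 := by
    rw [e2, e3, hu]; ring
  rw [hdisc] at hD
  have n01 : u0 ≠ u1 := by rintro rfl; simp at hD
  have n02 : u0 ≠ u2 := by rintro rfl; simp at hD
  have n12 : u1 ≠ u2 := by rintro rfl; simp at hD
  have hord : ∀ i j, i ≠ j → (s i - s j).order = 1 := by
    intro i j hij
    fin_cases i <;> fin_cases j
    · exact absurd rfl hij
    · exact r0.order_sub r1 n01
    · exact r0.order_sub r2 n02
    · exact r1.order_sub r0 n01.symm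
    · exact absurd rfl hij
    · exact r1.order_sub r2 n12
    · exact r2.order_sub r0 n02.symm
    · exact r2.order_sub r1 n12.symm
    · exact absurd rfl hij
  refine ⟨fun i j hij => ?_, 0, 1, by decide, ?_⟩
  · rw [hord i j hij]; norm_num
  · rw [hord 0 1 (by decide)]; norm_num
end
end
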